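/- arXiv:1104.2547 — 3 statements merged into one kernel-verified Lean document; each statement's English description precedes it below -/
import Mathlib

section
/- Let p ≥ 5 be a prime and let g be a generator of (ℤ/pℤ)ˣ; for x ∈ (ℤ/pℤ)ˣ let log_g(x) denote the unique element a ∈ ℤ/(p−1)ℤ with g^a = x. Then the set C₀^A = {{log_g(x), log_g(y)} : x,y ∈ (ℤ/pℤ)ˣ \ {1, 2⁻¹}, x + y = 1} defines a C-code of length p−1 in Z_{p−1} = ℤ/(p−1)ℤ: C₀^A consists of (p−3)/2 pairwise disjoint unordered pairs of nonzero elements of Z_{p−1}, and setting C_i = {{a+i, b+i} : {a,b} ∈ C₀^A} for i ∈ Z_{p−1}, for all m ≠ k in Z_{p−1} one has C_m ∩ C_k = ∅, the simple graph on vertex set Z_{p−1} with edge set C_m ∪ C_k contains no cycle, and m and k lie in different connected components of that graph. -/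
/-! Common definitions: C-codes, even starters, even 2-starters,
and bipyramidal (perfect) one-factorizations of the graph `G_{2n+2}`. -/

/-- Translate each unordered pair in `C` by `i`. -/
def shiftSet {m : ℕ} (i : ZMod m) (C : Set (Sym2 (ZMod m))) : Set (Sym2 (ZMod m)) :=
  (Sym2.map (· + i)) '' C

/-- `C` consists of `k` pairwise disjoint unordered pairs (2-element sets) of nonzero
elements of `ZMod m`. -/
def IsPairing (m k : ℕ) (C : Set (Sym2 (ZMod m))) : Prop :=
  C.ncard = k ∧ (∀ e ∈ C, ¬ e.IsDiag) ∧ (∀ e ∈ C, (0 : ZMod m) ∉ e) ∧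
    (∀ e ∈ C, ∀ e' ∈ C, e ≠ e' → ∀ a, a ∈ e → a ∉ e')

/-- The defining condition of a C-code with columns `C_i = i + C0`:
for all `a ≠ b`, the columns `C_a` and `C_b` are disjoint, the graph on `ZMod m`
with edge set `C_a ∪ C_b` has no cycle, and `a`, `b` are in different components. -/
def CCodeCond (m : ℕ) (C0 : Set (Sym2 (ZMod m))) : Prop :=
  ∀ a b : ZMod m, a ≠ b →
    shiftSet a C0 ∩ shiftSet b C0 = ∅ ∧
    (SimpleGraph.fromEdgeSet (shiftSet a C0 ∪ shiftSet b C0)).IsAcyclic ∧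
    ¬ (SimpleGraph.fromEdgeSet (shiftSet a C0 ∪ shiftSet b C0)).Reachable a b

/-- `C0` defines a C-code of length `2n`. -/
def IsCCode (n : ℕ) (C0 : Set (Sym2 (ZMod (2*n)))) : Prop :=
  IsPairing (2*n) (n-1) C0 ∧ CCodeCond (2*n) C0

/-- An even starter in `ZMod (2n)`. -/
def IsEvenStarter (n : ℕ) (S : Set (Sym2 (ZMod (2*n)))) : Prop :=
  IsPairing (2*n) (n-1) S ∧
  ∀ i : ZMod (2*n), i ≠ 0 → i ≠ (n : ZMod (2*n)) →
    ∃ x y : ZMod (2*n), s(x, y) ∈ S ∧ (i = x - y ∨ i = y - x)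

/-- An even starter in `ZMod m` for even `m`, phrased with `n = m / 2`. -/
def IsEvenStarterMod (m : ℕ) (S : Set (Sym2 (ZMod m))) : Prop :=
  IsPairing m (m / 2 - 1) S ∧
  ∀ i : ZMod m, i ≠ 0 → i ≠ ((m / 2 : ℕ) : ZMod m) →
    ∃ x y : ZMod m, s(x, y) ∈ S ∧ (i = x - y ∨ i = y - x)

/-- Vertices of `G_{2n+2}`: `Sum.inl i` for `i ∈ ZMod (2n)`, and `Sum.inr false = ∞₁`,
`Sum.inr true = ∞₂`. -/
abbrev Vtx (n : ℕ) : Type := ZMod (2*n) ⊕ Bool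

/-- The graph `G_{2n+2}`: all pairs of distinct vertices are adjacent except
`{∞₁, ∞₂}` and the pairs `{i, i+n}` for `i ∈ ZMod (2n)`. -/
def Ggraph (n : ℕ) : SimpleGraph (Vtx n) :=
  SimpleGraph.fromRel fun u v =>
    match u, v with
    | Sum.inl i, Sum.inl j => j ≠ i + (n : ZMod (2*n))
    | Sum.inl _, Sum.inr _ => True
    | Sum.inr _, Sum.inl _ => True
    | Sum.inr _, Sum.inr _ => False

/-- The permutation `σ^i` (rotation by `i` on `ZMod (2n)`, fixing `∞₁` and `∞₂`). -/
def vshift (n : ℕ) (i : ZMod (2*n)) : Vtx n → Vtx n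
  | Sum.inl x => Sum.inl (x + i)
  | Sum.inr b => Sum.inr b

/-- The involution swapping `∞₁` and `∞₂` and fixing all elements of `ZMod (2n)`. -/
def iotaSwap (n : ℕ) : Vtx n → Vtx n
  | Sum.inl x => Sum.inl x
  | Sum.inr b => Sum.inr (!b)

/-- `F` is a perfect matching (one-factor) of `G_{2n+2}`. -/
def IsOneFactor (n : ℕ) (F : Set (Sym2 (Vtx n))) : Prop :=
  F ⊆ (Ggraph n).edgeSet ∧ ∀ v : Vtx n, ∃! e, e ∈ F ∧ v ∈ e

/-- A bipyramidal one-factorization of `G_{2n+2}`: `2n` pairwise edge-disjoint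
one-factors whose union is the whole edge set, with `F i = σ^i (F 0)`. -/
def IsBipyramidalOF (n : ℕ) (F : ZMod (2*n) → Set (Sym2 (Vtx n))) : Prop :=
  (∀ i, IsOneFactor n (F i)) ∧ (∀ i j, i ≠ j → F i ∩ F j = ∅) ∧
    (⋃ i, F i) = (Ggraph n).edgeSet ∧
    ∀ i, F i = (Sym2.map (vshift n i)) '' (F 0)

/-- The graph with edge set `E` is a Hamiltonian cycle: it is connected and every
vertex has degree 2. -/
def IsHamCycleOn {V : Type} (E : Set (Sym2 V)) : Prop :=
  (SimpleGraph.fromEdgeSet E).Connected ∧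
    ∀ v : V, ((SimpleGraph.fromEdgeSet E).neighborSet v).ncard = 2

/-- A bipyramidal perfect one-factorization of `G_{2n+2}`. -/
def IsBipyramidalP1F (n : ℕ) (F : ZMod (2*n) → Set (Sym2 (Vtx n))) : Prop :=
  IsBipyramidalOF n F ∧ ∀ j k, j ≠ k → IsHamCycleOn (F j ∪ F k)

/-- An even starter in the multiplicative group `(ZMod p)ˣ`. -/
def IsMulEvenStarter (p : ℕ) (S : Set (Sym2 ((ZMod p)ˣ))) : Prop :=
  S.ncard = (p - 3) / 2 ∧ (∀ e ∈ S, ¬ e.IsDiag) ∧ (∀ e ∈ S, (1 : (ZMod p)ˣ) ∉ e) ∧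
    (∀ e ∈ S, ∀ e' ∈ S, e ≠ e' → ∀ a, a ∈ e → a ∉ e') ∧
    ∀ u : (ZMod p)ˣ, u ≠ 1 → u ≠ -1 →
      ∃ x y : (ZMod p)ˣ, s(x, y) ∈ S ∧ (u = x⁻¹ * y ∨ u = x * y⁻¹)

/-- The number of pairs in `S` whose difference (in either order) is `d`. -/
noncomputable def diffCount (m : ℕ) (d : ℕ) (S : Set (Sym2 (ZMod m))) : ℕ :=
  {e ∈ S | ∃ x y : ZMod m, e = s(x, y) ∧
    (y - x = (d : ZMod m) ∨ x - y = (d : ZMod m))}.ncard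

/-- `(S0, S1)` is an even 2-starter in `ZMod (2n)`: each `Sᵢ` consists of `n-1`
unordered pairs of elements of `ZMod (2n) \ {i}`, and every `d` with `1 ≤ d ≤ n-1`
occurs exactly twice as a difference of a pair, counted over both sets. -/
def IsEven2Starter (n : ℕ) (S0 S1 : Set (Sym2 (ZMod (2*n)))) : Prop :=
  S0.ncard = n - 1 ∧ S1.ncard = n - 1 ∧
    (∀ e ∈ S0, ¬ e.IsDiag) ∧ (∀ e ∈ S1, ¬ e.IsDiag) ∧
    (∀ e ∈ S0, (0 : ZMod (2*n)) ∉ e) ∧ (∀ e ∈ S1, (1 : ZMod (2*n)) ∉ e) ∧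
    ∀ d : ℕ, 1 ≤ d → d ≤ n - 1 →
      diffCount (2*n) d S0 + diffCount (2*n) d S1 = 2

/-- The `i`-th column induced by `(S0, S1)`:
`C_i = {{x + 2⌊ī/2⌋, y + 2⌊ī/2⌋} : {x,y} ∈ S_{ī mod 2}}` where `ī = i.val`. -/
def qCol (n : ℕ) (S0 S1 : Set (Sym2 (ZMod (2*n)))) (i : ZMod (2*n)) :
    Set (Sym2 (ZMod (2*n))) :=
  (Sym2.map (· + ((2 * (i.val / 2) : ℕ) : ZMod (2*n)))) ''
    (if i.val % 2 = 0 then S0 else S1)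

/-- The quasi-C-code condition for the column family induced by `(S0, S1)`. -/
def QuasiCCodeCond (n : ℕ) (S0 S1 : Set (Sym2 (ZMod (2*n)))) : Prop :=
  ∀ a b : ZMod (2*n), a ≠ b →
    qCol n S0 S1 a ∩ qCol n S0 S1 b = ∅ ∧
    (SimpleGraph.fromEdgeSet (qCol n S0 S1 a ∪ qCol n S0 S1 b)).IsAcyclic ∧
    ¬ (SimpleGraph.fromEdgeSet (qCol n S0 S1 a ∪ qCol n S0 S1 b)).Reachable a b

/-! Write `φ i = g ^ i`. Translating a pair by `a` multiplies its exponentials by `φ a`, so the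
column `C_a` consists of the pairs `{i, j}` with `φ i + φ j = φ a`: it is the graph
`x + y = φ a` on `ZMod p` with the vertex `0` removed. For distinct nonzero `c, d` the graph
`x + y = c` or `x + y = d` is connected, because `x` is joined to `c - x` and then to
`d - (c - x) = x + (d - c)`, and `d - c` generates `ZMod p`. Each of the two sums contributes at
most `(p - 1) / 2` edges, so the graph is a tree. The walk `c, 0, d` is its only path between `c`
and `d`; hence removing `0` separates `c` from `d` and leaves a forest. -/

section Graph

variable {V W : Type*}

theorem two_mul_ncard_edgeSet_of_neighborSet_subsingleton [Finite V] {G : SimpleGraph V}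
    (hG : ∀ v, (G.neighborSet v).Subsingleton) : 2 * G.edgeSet.ncard = G.support.ncard := by
  classical
  have := Fintype.ofFinite V
  have degree_eq (v : V) : G.degree v = if v ∈ G.support then 1 else 0 := by
    split_ifs with hv
    · obtain ⟨w, hw⟩ := hv
      rw [← G.card_neighborFinset_eq_degree, Finset.card_eq_one]
      exact ⟨w, Finset.eq_singleton_iff_unique_mem.2
        ⟨(G.mem_neighborFinset v w).2 hw, fun u hu ↦ hG v ((G.mem_neighborFinset v u).1 hu) hw⟩⟩
    · rwa [← not_ne_iff, ← Nat.pos_iff_ne_zero, G.degree_pos_iff_mem_support]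
  rw [← G.coe_edgeFinset, Set.ncard_coe_finset, ← G.sum_degrees_eq_twice_card_edges,
    Set.ncard_eq_toFinset_card']
  simp [degree_eq, Finset.sum_boole]

theorem not_reachable_comap_of_isAcyclic {G : SimpleGraph W} (hG : G.IsAcyclic) (f : V ↪ W) {w : W}
    (hw : w ∉ Set.range f) {a b : V} (hab : a ≠ b) (ha : G.Adj w (f a)) (hb : G.Adj w (f b)) :
    ¬ (G.comap f).Reachable a b := by
  intro hreach
  obtain ⟨q, hq⟩ := hreach.exists_isPath
  let F : G.comap f →g G := (SimpleGraph.Embedding.comap f G).toHom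
  have through_w : (SimpleGraph.Walk.cons ha.symm (.cons hb .nil)).IsPath := by
    simp [ha.ne', hb.ne, f.injective.ne hab]
  have unique : q.map F = .cons ha.symm (.cons hb .nil) := congrArg Subtype.val <|
    (hG.subsingleton_path (f a) (f b)).elim ⟨_, hq.map f.injective⟩ ⟨_, through_w⟩
  have hmem : w ∈ (q.map F).support := by
    rw [unique]
    exact List.mem_cons_of_mem _ List.mem_cons_self
  rw [SimpleGraph.Walk.support_map, List.mem_map] at hmem
  obtain ⟨v, -, hv⟩ := hmem
  exact hw ⟨v, hv⟩

end Graph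

section SumGraph

variable {A : Type*}

/-- The sum graph of `c`: distinct elements are adjacent when they add up to `c`. Columns of the
code are restrictions of such graphs to nonzero residues. -/
def sumGraph [AddCommMonoid A] (c : A) : SimpleGraph A where
  Adj x y := x ≠ y ∧ x + y = c
  symm := ⟨fun x y h ↦ ⟨h.1.symm, (add_comm y x).trans h.2⟩⟩
  loopless := ⟨fun _ h ↦ h.1 rfl⟩

theorem neighborSet_sumGraph_subsingleton [AddCancelCommMonoid A] (c x : A) :
    ((sumGraph c).neighborSet x).Subsingleton :=
  fun _ hy _ hz ↦ add_left_cancel (hy.2.trans hz.2.symm)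

variable [AddCommGroup A]

theorem sumGraph_reachable_sub (c x : A) : (sumGraph c).Reachable x (c - x) := by
  by_cases h : x = c - x
  · rw [← h]
  · exact SimpleGraph.Adj.reachable ⟨h, add_sub_cancel x c⟩

theorem sumGraph_sup_reachable_add_nsmul (c d x : A) (k : ℕ) :
    (sumGraph c ⊔ sumGraph d).Reachable x (x + k • (d - c)) := by
  induction k with
  | zero => simp
  | succ k ih =>
    set y := x + k • (d - c)
    have hc : (sumGraph c ⊔ sumGraph d).Reachable y (c - y) :=
      (sumGraph_reachable_sub c y).mono le_sup_left
    have hd : (sumGraph c ⊔ sumGraph d).Reachable (c - y) (d - (c - y)) :=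
      (sumGraph_reachable_sub d (c - y)).mono le_sup_right
    have hy : x + (k + 1) • (d - c) = d - (c - y) := by
      rw [succ_nsmul, ← add_assoc]
      change y + (d - c) = d - (c - y)
      abel
    exact hy ▸ ih.trans (hc.trans hd)

variable [Finite A]

theorem connected_sumGraph_sup {c d : A} (hcd : ∀ x, x ∈ AddSubgroup.zmultiples (d - c)) :
    (sumGraph c ⊔ sumGraph d).Connected := by
  have reachable (x y : A) : (sumGraph c ⊔ sumGraph d).Reachable x y := by
    obtain ⟨k, hk⟩ := mem_multiples_iff_mem_zmultiples.2 (hcd (y - x))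
    have hy : x + k • (d - c) = y := by rw [show k • (d - c) = y - x from hk, add_sub_cancel]
    exact hy ▸ sumGraph_sup_reachable_add_nsmul c d x k
  exact ⟨reachable⟩

theorem two_mul_ncard_edgeSet_sumGraph_lt (hA : Odd (Nat.card A)) (c : A) :
    2 * (sumGraph c).edgeSet.ncard < Nat.card A := by
  rw [two_mul_ncard_edgeSet_of_neighborSet_subsingleton (neighborSet_sumGraph_subsingleton c)]
  obtain ⟨x, hx⟩ := (nsmulCoprime hA.coprime_two_right).surjective c
  rw [nsmulCoprime_apply] at hx
  have isolated : x ∉ (sumGraph c).support := by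
    rintro ⟨y, hne, hy⟩
    exact hne (add_left_cancel (hy.trans (hx.symm.trans (two_nsmul x)))).symm
  exact Set.ncard_lt_card fun h ↦ isolated (h ▸ Set.mem_univ x)

theorem isTree_sumGraph_sup (hA : Odd (Nat.card A)) {c d : A}
    (hcd : ∀ x, x ∈ AddSubgroup.zmultiples (d - c)) : (sumGraph c ⊔ sumGraph d).IsTree := by
  have hconn := connected_sumGraph_sup hcd
  refine SimpleGraph.isTree_iff_connected_and_card.2 ⟨hconn, ?_⟩
  have lower := hconn.card_vert_le_card_edgeSet_add_one
  have union := Set.ncard_union_le (sumGraph c).edgeSet (sumGraph d).edgeSet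
  rw [← SimpleGraph.edgeSet_sup, ← Nat.card_coe_set_eq] at union
  have hc := two_mul_ncard_edgeSet_sumGraph_lt hA c
  have hd := two_mul_ncard_edgeSet_sumGraph_lt hA d
  obtain ⟨k, hk⟩ := hA
  lia

end SumGraph

section PairSets

variable {m : ℕ}

theorem mk_mem_shiftSet {i x y : ZMod m} {C : Set (Sym2 (ZMod m))} :
    s(x, y) ∈ shiftSet i C ↔ s(x - i, y - i) ∈ C := by
  constructor
  · rintro ⟨e, he, hxy⟩
    have : e = s(x - i, y - i) := by
      apply Sym2.map.injective (add_left_injective i)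
      simpa using hxy
    exact this ▸ he
  · exact fun h ↦ ⟨_, h, by simp⟩

theorem isPairing_edgeSet [NeZero m] {G : SimpleGraph (ZMod m)}
    (hG : ∀ i, (G.neighborSet i).Subsingleton) (h0 : 0 ∉ G.support) :
    IsPairing m (G.support.ncard / 2) G.edgeSet := by
  refine ⟨?_, fun _ ↦ G.not_isDiag_of_mem_edgeSet, ?_, ?_⟩
  · rw [← two_mul_ncard_edgeSet_of_neighborSet_subsingleton hG, Nat.mul_div_cancel_left _ two_pos]
  · rintro _ he ⟨i, rfl⟩
    exact h0 ⟨i, he⟩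
  · rintro _ he _ he' hne i ⟨j, rfl⟩ ⟨k, rfl⟩
    exact hne (congrArg (s(i, ·)) (hG i he he'))

end PairSets

theorem eq_inv_two_iff_of_add_eq_one {K : Type*} [DivisionRing K] (h2 : (2 : K) ≠ 0) {x y : K}
    (hxy : x + y = 1) : x = 2⁻¹ ↔ x = y := by
  rw [← one_div, eq_div_iff h2, mul_two, ← hxy, add_right_inj]

section Column

variable {m : ℕ}

/-- The column `C_a`, as a graph on exponents: with `φ i = g ^ i`, distinct `i` and `j` are adjacent
when `g ^ i + g ^ j = g ^ a`. Encoding the exponential as an additive character `φ` turns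
translation of exponents into multiplication by values of `φ`. -/
def columnGraph {R : Type*} [CommSemiring R] (φ : AddChar (ZMod m) R) (a : ZMod m) :
    SimpleGraph (ZMod m) :=
  (sumGraph (φ a)).comap φ

section Semiring

variable {R : Type*} [CommSemiring R] {φ : AddChar (ZMod m) R}

theorem columnGraph_adj {a i j : ZMod m} :
    (columnGraph φ a).Adj i j ↔ φ i ≠ φ j ∧ φ i + φ j = φ a :=
  Iff.rfl

theorem shiftSet_edgeSet_columnGraph (φ : AddChar (ZMod m) R) (a b : ZMod m) :
    shiftSet b (columnGraph φ a).edgeSet = (columnGraph φ (a + b)).edgeSet := by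
  ext e
  induction e with
  | _ x y =>
    have map_sub_mul (z : ZMod m) : φ (z - b) * φ b = φ z := by
      rw [← φ.map_add_eq_mul, sub_add_cancel]
    rw [mk_mem_shiftSet, SimpleGraph.mem_edgeSet, SimpleGraph.mem_edgeSet, columnGraph_adj,
      columnGraph_adj, ← map_sub_mul x, ← map_sub_mul y, φ.map_add_eq_mul, ← add_mul, Ne, Ne,
      (φ.val_isUnit b).mul_left_inj, (φ.val_isUnit b).mul_left_inj]

theorem disjoint_edgeSet_columnGraph (hφ : Function.Injective φ) {a b : ZMod m} (hab : a ≠ b) :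
    Disjoint (columnGraph φ a).edgeSet (columnGraph φ b).edgeSet := by
  rw [Set.disjoint_left]
  intro e ha hb
  induction e with
  | _ x y => exact hab (hφ (ha.2.symm.trans hb.2))

end Semiring

theorem neighborSet_columnGraph_subsingleton {R : Type*} [CommRing R] {φ : AddChar (ZMod m) R}
    (hφ : Function.Injective φ) (a i : ZMod m) : ((columnGraph φ a).neighborSet i).Subsingleton :=
  fun _ hj _ hk ↦ hφ (neighborSet_sumGraph_subsingleton (φ a) (φ i) hj hk)

section Field

variable {F : Type*} [Field F] {φ : AddChar (ZMod m) F}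

theorem map_ne_one_of_add_eq_one {i j : ZMod m} (hij : φ i + φ j = 1) : φ i ≠ 1 := by
  intro hi
  rw [hi, add_eq_left] at hij
  exact (φ.val_isUnit j).ne_zero hij

theorem exists_support_columnGraph_zero_eq_compl_pair (h2 : (2 : F) ≠ 0) (hφ : Function.Injective φ)
    (hrange : ∀ x ≠ 0, x ∈ Set.range φ) :
    ∃ h : ZMod m, h ≠ 0 ∧ (columnGraph φ 0).support = {0, h}ᶜ := by
  obtain ⟨h, hh⟩ := hrange 2⁻¹ (inv_ne_zero h2)
  refine ⟨h, ?_, ?_⟩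
  · rintro rfl
    rw [φ.map_zero_eq_one, eq_comm, inv_eq_one] at hh
    exact one_ne_zero (by linear_combination hh)
  ext i
  simp only [SimpleGraph.mem_support, columnGraph_adj, φ.map_zero_eq_one, Set.mem_compl_iff,
    Set.mem_insert_iff, Set.mem_singleton_iff, not_or]
  constructor
  · rintro ⟨j, hne, hj⟩
    refine ⟨?_, ?_⟩
    · rintro rfl
      exact map_ne_one_of_add_eq_one hj φ.map_zero_eq_one
    · rintro rfl
      exact hne ((eq_inv_two_iff_of_add_eq_one h2 hj).1 hh)
  · rintro ⟨h0, hhalf⟩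
    have h1 : φ i ≠ 1 := by rwa [← φ.map_zero_eq_one, hφ.ne_iff]
    obtain ⟨j, hj⟩ := hrange (1 - φ i) (sub_ne_zero.2 h1.symm)
    have hij : φ i + φ j = 1 := by rw [hj, add_sub_cancel]
    refine ⟨j, fun h ↦ hhalf (hφ ?_), hij⟩
    rw [hh, eq_inv_two_iff_of_add_eq_one h2 hij]
    exact h

theorem isPairing_columnGraph_zero [NeZero m] (h2 : (2 : F) ≠ 0) (hφ : Function.Injective φ)
    (hrange : ∀ x ≠ 0, x ∈ Set.range φ) :
    IsPairing m ((m - 2) / 2) (columnGraph φ 0).edgeSet := by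
  obtain ⟨h, h0, hsupp⟩ := exists_support_columnGraph_zero_eq_compl_pair h2 hφ hrange
  have hcard : (columnGraph φ 0).support.ncard = m - 2 := by
    rw [hsupp, Set.ncard_compl, Set.ncard_pair h0.symm, Nat.card_zmod]
  rw [← hcard]
  exact isPairing_edgeSet (neighborSet_columnGraph_subsingleton hφ 0) (by simp [hsupp])

theorem setOf_log_pairs_eq_edgeSet_columnGraph (h2 : (2 : F) ≠ 0) (hφ : Function.Injective φ)
    {L : Fˣ → ZMod m} (hL : ∀ x : Fˣ, φ (L x) = x) :
    {e | ∃ x y : Fˣ, e = s(L x, L y) ∧ x ≠ 1 ∧ y ≠ 1 ∧ (x : F) ≠ 2⁻¹ ∧ (y : F) ≠ 2⁻¹ ∧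
      (x : F) + y = 1} = (columnGraph φ 0).edgeSet := by
  ext e
  constructor
  · rintro ⟨x, y, rfl, -, -, hx, -, hxy⟩
    rw [SimpleGraph.mem_edgeSet, columnGraph_adj, hL, hL, φ.map_zero_eq_one]
    exact ⟨mt (eq_inv_two_iff_of_add_eq_one h2 hxy).2 hx, hxy⟩
  · induction e with
    | _ i j =>
      rw [SimpleGraph.mem_edgeSet, columnGraph_adj, φ.map_zero_eq_one]
      rintro ⟨hne, hij⟩
      have hji : φ j + φ i = 1 := (add_comm _ _).trans hij
      have log_exp (k : ZMod m) : L (φ.val_isUnit k).unit = k := hφ (hL _)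
      have exp_ne_one {k l : ZMod m} (hkl : φ k + φ l = 1) : (φ.val_isUnit k).unit ≠ 1 :=
        mt (congrArg Units.val) (map_ne_one_of_add_eq_one hkl)
      exact ⟨(φ.val_isUnit i).unit, (φ.val_isUnit j).unit, by rw [log_exp, log_exp],
        exp_ne_one hij, exp_ne_one hji, mt (eq_inv_two_iff_of_add_eq_one h2 hij).1 hne,
        mt (eq_inv_two_iff_of_add_eq_one h2 hji).1 hne.symm, hij⟩

end Field

section ZModPrime

variable {p : ℕ} [Fact p.Prime]

theorem isTree_sumGraph_sup_zmod (hp : Odd p) {c d : ZMod p} (hcd : c ≠ d) :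
    (sumGraph c ⊔ sumGraph d).IsTree := by
  have hcard : Nat.card (ZMod p) = p := Nat.card_zmod p
  exact isTree_sumGraph_sup (hcard.symm ▸ hp) fun _ ↦
    mem_zmultiples_of_prime_card hcard (sub_ne_zero.2 hcd.symm)

theorem cCodeCond_columnGraph_zero (hp : Odd p) {φ : AddChar (ZMod m) (ZMod p)}
    (hφ : Function.Injective φ) : CCodeCond m (columnGraph φ 0).edgeSet := by
  intro a b hab
  rw [shiftSet_edgeSet_columnGraph, shiftSet_edgeSet_columnGraph, zero_add, zero_add,
    ← SimpleGraph.edgeSet_sup, SimpleGraph.fromEdgeSet_edgeSet]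
  let T := sumGraph (φ a) ⊔ sumGraph (φ b)
  change _ ∧ (T.comap φ).IsAcyclic ∧ ¬ (T.comap φ).Reachable a b
  have hT : T.IsAcyclic := (isTree_sumGraph_sup_zmod hp (hφ.ne hab)).isAcyclic
  have hne (i : ZMod m) : 0 ≠ φ i := (φ.val_isUnit i).ne_zero.symm
  have hzero : 0 ∉ Set.range φ := fun ⟨i, hi⟩ ↦ hne i hi.symm
  exact ⟨(disjoint_edgeSet_columnGraph hφ hab).inter_eq, hT.of_comap ⟨φ, hφ⟩,
    not_reachable_comap_of_isAcyclic hT ⟨φ, hφ⟩ hzero hab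
      (Or.inl ⟨hne a, zero_add _⟩) (Or.inr ⟨hne b, zero_add _⟩)⟩

end ZModPrime

end Column

theorem zmodChar_injective {M : Type*} [CommMonoid M] {n : ℕ} [NeZero n] {ζ : M}
    (hζ : IsPrimitiveRoot ζ n) : Function.Injective (AddChar.zmodChar n hζ.pow_eq_one) :=
  fun i j h ↦ ZMod.val_injective n (hζ.pow_inj i.val_lt j.val_lt h)

/-- Let `g` generate `(ZMod p)ˣ`, `p ≥ 5` prime, and let `L` be the
discrete logarithm to base `g` valued in `ZMod (p-1)`. Then
`C₀^A = {{L x, L y} : x, y ∈ (ZMod p)ˣ \ {1, 2⁻¹}, x + y = 1}` consists of `(p-3)/2`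
pairwise disjoint unordered pairs of nonzero elements of `ZMod (p-1)` and defines a
C-code of length `p-1`. -/
theorem stmt12 (p : ℕ) [Fact p.Prime] (hp : 5 ≤ p)
    (g : (ZMod p)ˣ) (hg : ∀ u : (ZMod p)ˣ, u ∈ Subgroup.zpowers g)
    (L : (ZMod p)ˣ → ZMod (p - 1)) (hL : ∀ x : (ZMod p)ˣ, g ^ (L x).val = x)
    (C0A : Set (Sym2 (ZMod (p - 1))))
    (hC0A : C0A = {e | ∃ x y : (ZMod p)ˣ, e = s(L x, L y) ∧
      x ≠ 1 ∧ y ≠ 1 ∧ (x : ZMod p) ≠ (2 : ZMod p)⁻¹ ∧ (y : ZMod p) ≠ (2 : ZMod p)⁻¹ ∧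
      (x : ZMod p) + (y : ZMod p) = 1}) :
    IsPairing (p - 1) ((p - 3) / 2) C0A ∧ CCodeCond (p - 1) C0A := by
  have : NeZero (p - 1) := ⟨by lia⟩
  have hodd : Odd p := (Fact.out : p.Prime).odd_of_ne_two (by lia)
  have h2 : (2 : ZMod p) ≠ 0 := Ring.two_ne_zero (by rw [ZMod.ringChar_zmod_n]; lia)
  have horder : orderOf g = p - 1 := by
    rw [orderOf_eq_card_of_forall_mem_zpowers hg, Nat.card_eq_fintype_card, ZMod.card_units]
  have hprim : IsPrimitiveRoot (g : ZMod p) (p - 1) :=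
    IsPrimitiveRoot.coe_units_iff.2 (horder ▸ IsPrimitiveRoot.orderOf g)
  let φ : AddChar (ZMod (p - 1)) (ZMod p) := AddChar.zmodChar (p - 1) hprim.pow_eq_one
  have hφ : Function.Injective φ := zmodChar_injective hprim
  have hφL (x : (ZMod p)ˣ) : φ (L x) = x := congrArg Units.val (hL x)
  have hrange (x : ZMod p) (hx : x ≠ 0) : x ∈ Set.range φ := ⟨L (Units.mk0 x hx), hφL _⟩
  rw [hC0A, setOf_log_pairs_eq_edgeSet_columnGraph h2 hφ hφL]
  exact ⟨isPairing_columnGraph_zero h2 hφ hrange, cCodeCond_columnGraph_zero hodd hφ⟩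
end

section
/- In Z_8 = ℤ/8ℤ, let S₀ = {{1,2},{3,5},{4,6}} and S₁ = {{0,3},{2,7},{4,5}}. Then (S₀,S₁) is an even 2-starter in Z_8, and the induced column family C_i = {{x+2⌊ī/2⌋, y+2⌊ī/2⌋} : {x,y} ∈ S_{ī mod 2}} for i ∈ Z_8 (where ī ∈ {0,…,7} is the canonical representative of i) satisfies the quasi-C-code condition: for all m ≠ k in Z_8, C_m ∩ C_k = ∅, the simple graph on vertex set Z_8 with edge set C_m ∪ C_k contains no cycle, and m and k lie in different connected components of that graph. (Hence a quasi-C-code of length 8 exists, although no C-code of length 8 exists.) -/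
/-!
Both `S₀` and `S₁` are matchings, and the column `C_i` misses `i`, so `C_m ∪ C_k` has maximum degree
at most two and `m`, `k` have degree at most one in it. It turns out to be a pair of vertex-disjoint
paths, one from `m` and one from `k`; such a graph is acyclic and separates `m` from `k`. Since
`C_{i + 2j} = C_i + 2j`, only eight pairs `{m, k}` have to be inspected.
-/

/-- The edges of the path that visits the vertices of `l` in order, listed as in
`SimpleGraph.Walk.edges`. -/
def pathEdges {V : Type*} (l : List V) : List (Sym2 V) :=
  List.zipWith (s(·, ·)) l l.tail

/-- The requirement that the quasi-C-code condition places on columns `E` and `F` with distinct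
indices `a` and `b`, for arbitrary edge sets so that it can be transported along bijections. -/
def ColumnsCompatible {V : Type*} (E F : Set (Sym2 V)) (a b : V) : Prop :=
  E ∩ F = ∅ ∧ (SimpleGraph.fromEdgeSet (E ∪ F)).IsAcyclic ∧
    ¬ (SimpleGraph.fromEdgeSet (E ∪ F)).Reachable a b

section PathEdges

variable {V : Type*}

theorem pathEdges_cons_cons (x y : V) (l : List V) :
    pathEdges (x :: y :: l) = s(x, y) :: pathEdges (y :: l) :=
  rfl

theorem mem_of_mem_pathEdges {l : List V} {e : Sym2 V} {v : V} (he : e ∈ pathEdges l)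
    (hv : v ∈ e) : v ∈ l := by
  induction l with
  | nil => simp [pathEdges] at he
  | cons x l ih =>
    cases l with
    | nil => simp [pathEdges] at he
    | cons y l =>
      rw [pathEdges_cons_cons, List.mem_cons] at he
      rcases he with rfl | he
      · rcases Sym2.mem_iff.1 hv with rfl | rfl <;> simp
      · exact List.mem_cons_of_mem x (ih he)

theorem pathEdges_subset_cons (x : V) (l : List V) : pathEdges l ⊆ pathEdges (x :: l) := by
  cases l with
  | nil => exact List.nil_subset _
  | cons y l => exact List.subset_cons_self _ _

theorem pathEdges_subset_append_right (p q : List V) : pathEdges q ⊆ pathEdges (p ++ q) := by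
  induction p with
  | nil => exact List.Subset.refl _
  | cons x p ih => exact List.Subset.trans ih (pathEdges_subset_cons x (p ++ q))

theorem pathEdges_subset_append_left (p q : List V) : pathEdges p ⊆ pathEdges (p ++ q) := by
  induction p with
  | nil => exact List.nil_subset _
  | cons x p ih =>
    cases p with
    | nil => exact List.nil_subset _
    | cons y p => exact List.cons_subset_cons _ ih

theorem not_reachable_of_forall_adj_mem {G : SimpleGraph V} {s : Set V} {a b : V}
    (hs : ∀ x y, G.Adj x y → x ∈ s → y ∈ s) (ha : a ∈ s) (hb : b ∉ s) : ¬ G.Reachable a b := by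
  rw [SimpleGraph.reachable_iff_reflTransGen]
  intro h
  induction h with
  | refl => exact hb ha
  | tail _ hadj ih => exact ih fun hx => hb (hs _ _ hadj hx)

theorem isAcyclic_fromEdgeSet_pathEdges {l : List V} (hl : l.Nodup) :
    (SimpleGraph.fromEdgeSet {e | e ∈ pathEdges l}).IsAcyclic := by
  induction l with
  | nil => simp [pathEdges]
  | cons x l ih =>
    cases l with
    | nil => simp [pathEdges]
    | cons y l =>
      obtain ⟨hx, hl⟩ := List.nodup_cons.1 hl
      have hxy : ¬ (SimpleGraph.fromEdgeSet {e | e ∈ pathEdges (y :: l)}).Reachable x y := by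
        refine not_reachable_of_forall_adj_mem (s := {x}) ?_ rfl ?_
        · rintro _ z hadj rfl
          exact absurd (mem_of_mem_pathEdges hadj.1 (Sym2.mem_mk_left _ z)) hx
        · rintro rfl
          exact hx List.mem_cons_self
      have hinsert : SimpleGraph.fromEdgeSet {e | e ∈ pathEdges (x :: y :: l)} =
          SimpleGraph.fromEdgeSet {e | e ∈ pathEdges (y :: l)} ⊔ SimpleGraph.edge x y := by
        rw [SimpleGraph.edge, ← SimpleGraph.fromEdgeSet_union]
        congr 1
        ext e
        simp [pathEdges_cons_cons, or_comm]
      rw [hinsert]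
      exact (ih hl).sup_edge_of_not_reachable hxy

end PathEdges

namespace ColumnsCompatible

variable {V W : Type*} {E F : Set (Sym2 V)} {a b : V}

theorem symm (h : ColumnsCompatible E F a b) : ColumnsCompatible F E b a := by
  obtain ⟨hdisj, hacyclic, hreach⟩ := h
  rw [Set.union_comm] at hacyclic hreach
  exact ⟨Set.inter_comm F E ▸ hdisj, hacyclic, fun h => hreach h.symm⟩

theorem image (h : ColumnsCompatible E F a b) (f : V ≃ W) :
    ColumnsCompatible (Sym2.map f '' E) (Sym2.map f '' F) (f a) (f b) := by
  obtain ⟨hdisj, hacyclic, hreach⟩ := h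
  have hf : Function.Injective (Sym2.map f) := Sym2.map.injective f.injective
  let φ : SimpleGraph.fromEdgeSet (E ∪ F) ≃g SimpleGraph.fromEdgeSet (Sym2.map f '' (E ∪ F)) :=
    { f with
      map_rel_iff' := by
        intro x y
        rw [SimpleGraph.fromEdgeSet_adj, SimpleGraph.fromEdgeSet_adj, ← Sym2.map_mk,
          hf.mem_set_image, f.injective.ne_iff] }
  refine ⟨?_, ?_, ?_⟩
  · rw [← Set.image_inter hf, hdisj, Set.image_empty]
  · rw [← Set.image_union]
    exact φ.isAcyclic_iff.1 hacyclic
  · rw [← Set.image_union]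
    exact fun h => hreach (φ.reachable_iff.1 h)

theorem of_pathEdges {p q : List V} (hdisj : E ∩ F = ∅)
    (hsub : ∀ e ∈ E ∪ F, e ∈ pathEdges (a :: p) ++ pathEdges (b :: q))
    (hpq : (a :: p ++ b :: q).Nodup) : ColumnsCompatible E F a b := by
  have hdisjoint : (a :: p).Disjoint (b :: q) := List.disjoint_of_nodup_append hpq
  refine ⟨hdisj, ?_, ?_⟩
  · refine (isAcyclic_fromEdgeSet_pathEdges hpq).anti (SimpleGraph.fromEdgeSet_mono fun e he => ?_)
    exact (List.mem_append.1 (hsub e he)).elim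
      (fun h => pathEdges_subset_append_left _ _ h) (fun h => pathEdges_subset_append_right _ _ h)
  · refine not_reachable_of_forall_adj_mem (s := {v | v ∈ a :: p}) ?_ List.mem_cons_self
      fun hb => hdisjoint hb List.mem_cons_self
    intro x y hadj hx
    rcases List.mem_append.1 (hsub _ hadj.1) with he | he
    · exact mem_of_mem_pathEdges he (Sym2.mem_mk_right x y)
    · exact (hdisjoint hx (mem_of_mem_pathEdges he (Sym2.mem_mk_left x y))).elim

end ColumnsCompatible

section Columns

variable {n : ℕ} [NeZero n]

theorem val_add_two_mul_mod_two (i j : ZMod (2 * n)) :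
    (i + 2 * j).val % 2 = i.val % 2 := by
  rw [ZMod.val_add, Nat.mod_mul_right_mod, two_mul j, ZMod.val_add, Nat.add_mod,
    Nat.mod_mul_right_mod]
  lia

theorem qCol_eq_image_add_sub (S0 S1 : Set (Sym2 (ZMod (2 * n)))) (i : ZMod (2 * n)) :
    qCol n S0 S1 i =
      Sym2.map (· + (i - (i.val % 2 : ℕ))) '' (if i.val % 2 = 0 then S0 else S1) := by
  have hshift : ((2 * (i.val / 2) : ℕ) : ZMod (2 * n)) = i - (i.val % 2 : ℕ) := by
    rw [eq_sub_iff_add_eq, ← Nat.cast_add, Nat.div_add_mod, ZMod.natCast_zmod_val]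
  rw [qCol, hshift]

theorem qCol_add_two_mul (S0 S1 : Set (Sym2 (ZMod (2 * n)))) (i j : ZMod (2 * n)) :
    qCol n S0 S1 (i + 2 * j) = Sym2.map (· + 2 * j) '' qCol n S0 S1 i := by
  rw [qCol_eq_image_add_sub, qCol_eq_image_add_sub, val_add_two_mul_mod_two, Set.image_image]
  refine Set.image_congr fun e _ => ?_
  rw [Sym2.map_map]
  refine Sym2.map_congr fun x _ => ?_
  simp only [Function.comp_apply]
  ring

theorem quasiCCodeCond_of_representatives {S0 S1 : Set (Sym2 (ZMod (2 * n)))}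
    {R : List (ZMod (2 * n) × ZMod (2 * n))}
    (hcover : ∀ a b : ZMod (2 * n), a ≠ b → ∃ r ∈ R, ∃ j : ZMod (2 * n),
      (r.1 + 2 * j = a ∧ r.2 + 2 * j = b) ∨ (r.1 + 2 * j = b ∧ r.2 + 2 * j = a))
    (hR : ∀ r ∈ R, ColumnsCompatible (qCol n S0 S1 r.1) (qCol n S0 S1 r.2) r.1 r.2) :
    QuasiCCodeCond n S0 S1 := by
  have htranslate (r) (hr : r ∈ R) (j : ZMod (2 * n)) :
      ColumnsCompatible (qCol n S0 S1 (r.1 + 2 * j)) (qCol n S0 S1 (r.2 + 2 * j))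
        (r.1 + 2 * j) (r.2 + 2 * j) := by
    rw [qCol_add_two_mul, qCol_add_two_mul]
    exact (hR r hr).image (Equiv.addRight (2 * j))
  intro a b hab
  obtain ⟨r, hr, j, ⟨rfl, rfl⟩ | ⟨rfl, rfl⟩⟩ := hcover a b hab
  · exact htranslate r hr j
  · exact (htranslate r hr j).symm

end Columns

/-- The column `qCol n S0 S1 i` of finite sets of pairs, in computable form. -/
def qColFinset (n : ℕ) (S0 S1 : Finset (Sym2 (ZMod (2 * n)))) (i : ZMod (2 * n)) :
    Finset (Sym2 (ZMod (2 * n))) :=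
  (if i.val % 2 = 0 then S0 else S1).image
    (Sym2.map (· + ((2 * (i.val / 2) : ℕ) : ZMod (2 * n))))

theorem coe_qColFinset (n : ℕ) (S0 S1 : Finset (Sym2 (ZMod (2 * n)))) (i : ZMod (2 * n)) :
    (qColFinset n S0 S1 i : Set (Sym2 (ZMod (2 * n)))) = qCol n S0 S1 i := by
  rw [qColFinset, qCol, Finset.coe_image]
  split_ifs <;> rfl

theorem diffCount_coe {m : ℕ} [NeZero m] (d : ℕ) (S : Finset (Sym2 (ZMod m))) :
    diffCount m d S = (S.filter fun e => ∃ x y : ZMod m, e = s(x, y) ∧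
      (y - x = (d : ZMod m) ∨ x - y = (d : ZMod m))).card := by
  rw [diffCount, ← Set.ncard_coe_finset, Finset.coe_filter]
  rfl

/-- The set `S₀` of the even 2-starter in `ZMod 8`; its differences are `±1, ±2, ±2`. -/
def starterZero : Finset (Sym2 (ZMod (2 * 4))) :=
  {s(1, 2), s(3, 5), s(4, 6)}

/-- The set `S₁` of the even 2-starter in `ZMod 8`; its differences are `±3, ±3, ±1`. -/
def starterOne : Finset (Sym2 (ZMod (2 * 4))) :=
  {s(0, 3), s(2, 7), s(4, 5)}

theorem isEven2Starter_starterZero_starterOne :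
    IsEven2Starter 4 (starterZero : Set (Sym2 (ZMod (2 * 4)))) starterOne := by
  refine ⟨?_, ?_, by decide, by decide, by decide, by decide, ?_⟩
  · rw [Set.ncard_coe_finset]
    decide
  · rw [Set.ncard_coe_finset]
    decide
  · intro d hd hd'
    rw [diffCount_coe, diffCount_coe]
    interval_cases d <;> decide +kernel

/-- Entry `((m, p), (k, q))` records that the paths `m :: p` and `k :: q` make up the graph with
edge set `C_m ∪ C_k`, for one pair `{m, k}` in each orbit under translation by even elements. -/
def columnPaths : List ((ZMod (2 * 4) × List (ZMod (2 * 4))) ×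
    (ZMod (2 * 4) × List (ZMod (2 * 4)))) :=
  [((0, [3, 5, 4, 6]), (1, [2, 7])),
   ((0, [6, 4, 3, 5, 7]), (2, [1])),
   ((0, []), (3, [5, 2, 1, 4, 6, 7])),
   ((0, [2, 1, 7]), (4, [6, 5, 3])),
   ((0, [1, 2]), (5, [3, 6, 4, 7])),
   ((0, [5, 3, 2, 1, 6, 4]), (7, [])),
   ((1, [4, 5, 2, 7, 6]), (3, [0])),
   ((1, [0, 3, 6]), (5, [4, 7, 2]))]

theorem exists_mem_columnPaths_of_ne : ∀ a b : ZMod (2 * 4), a ≠ b →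
    ∃ r ∈ columnPaths.map fun t => (t.1.1, t.2.1), ∃ j : ZMod (2 * 4),
      (r.1 + 2 * j = a ∧ r.2 + 2 * j = b) ∨ (r.1 + 2 * j = b ∧ r.2 + 2 * j = a) := by
  decide +kernel

theorem qColFinset_of_mem_columnPaths : ∀ t ∈ columnPaths,
    Disjoint (qColFinset 4 starterZero starterOne t.1.1)
      (qColFinset 4 starterZero starterOne t.2.1) ∧
    qColFinset 4 starterZero starterOne t.1.1 ∪ qColFinset 4 starterZero starterOne t.2.1 =
      (pathEdges (t.1.1 :: t.1.2) ++ pathEdges (t.2.1 :: t.2.2)).toFinset ∧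
    (t.1.1 :: t.1.2 ++ t.2.1 :: t.2.2).Nodup := by
  decide +kernel

theorem quasiCCodeCond_starterZero_starterOne :
    QuasiCCodeCond 4 (starterZero : Set (Sym2 (ZMod (2 * 4)))) starterOne := by
  refine quasiCCodeCond_of_representatives exists_mem_columnPaths_of_ne ?_
  rw [List.forall_mem_map]
  intro t ht
  obtain ⟨hdisj, hunion, hnodup⟩ := qColFinset_of_mem_columnPaths t ht
  rw [← coe_qColFinset, ← coe_qColFinset]
  refine .of_pathEdges ?_ ?_ hnodup
  · rw [← Set.disjoint_iff_inter_eq_empty]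
    exact Finset.disjoint_coe.2 hdisj
  · rw [← Finset.coe_union, hunion]
    simp

/-- In `ZMod 8`, the pair `S₀ = {{1,2},{3,5},{4,6}}`,
`S₁ = {{0,3},{2,7},{4,5}}` is an even 2-starter and its induced column family
satisfies the quasi-C-code condition; hence a quasi-C-code of length 8 exists. -/
theorem stmt14 :
    IsEven2Starter 4
      ({s((1 : ZMod (2*4)), 2), s(3, 5), s(4, 6)} : Set (Sym2 (ZMod (2*4))))
      ({s((0 : ZMod (2*4)), 3), s(2, 7), s(4, 5)} : Set (Sym2 (ZMod (2*4)))) ∧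
    QuasiCCodeCond 4
      ({s((1 : ZMod (2*4)), 2), s(3, 5), s(4, 6)} : Set (Sym2 (ZMod (2*4))))
      ({s((0 : ZMod (2*4)), 3), s(2, 7), s(4, 5)} : Set (Sym2 (ZMod (2*4)))) := by
  have hzero : (starterZero : Set (Sym2 (ZMod (2 * 4)))) = {s(1, 2), s(3, 5), s(4, 6)} := by
    simp [starterZero]
  have hone : (starterOne : Set (Sym2 (ZMod (2 * 4)))) = {s(0, 3), s(2, 7), s(4, 5)} := by
    simp [starterOne]
  rw [← hzero, ← hone]
  exact ⟨isEven2Starter_starterZero_starterOne, quasiCCodeCond_starterZero_starterOne⟩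
end

section
/- Let n ≥ 2 and let (S₀,S₁) be an even 2-starter in Z_{2n} such that for each i ∈ {0,1} the pairs of S_i are pairwise disjoint; let r_i be the unique element of Z_{2n} \ {i} occurring in no pair of S_i, and assume the canonical representatives r̄₀, r̄₁ ∈ {0,…,2n−1} have opposite parity. Define the twin (S′₀,S′₁) by S′_{r̄_i mod 2} = {{x−2⌊r̄_i/2⌋, y−2⌊r̄_i/2⌋} : {x,y} ∈ S_i} for i = 0,1. If the column family induced by (S₀,S₁) satisfies the quasi-C-code condition, then the column family induced by (S′₀,S′₁) also satisfies the quasi-C-code condition. -/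
/-!
Each column `C_k` is a matching missing exactly two vertices, `k` and some `e_k`, and the twin lists
the same columns with `C_k` placed at index `e_k`. Disjointness and acyclicity are therefore
inherited, and what has to be seen is that `k, l` are connected in `C_k ∪ C_l` if and only if
`e_k, e_l` are. Every component `K` of that graph is a union of edges of `C_k` together with
`K ∩ {k, e_k}`, and likewise for `l`; hence `|K|` is odd exactly when `K` separates `k` from `e_k`,
and exactly when it separates `l` from `e_l`.
-/

section Matching

variable {V W : Type*} {M N : Set (Sym2 V)} {p q p' q' : V}

theorem ncard_biUnion_sym2_of_pairwiseDisjoint [Finite V] (hdiag : ∀ e ∈ M, ¬ e.IsDiag)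
    (hdisj : M.PairwiseDisjoint ((↑) : Sym2 V → Set V)) :
    (⋃ e ∈ M, (e : Set V)).ncard = 2 * M.ncard := by
  have ncard_coe : ∀ e ∈ M, (e : Set V).ncard = 2 := by
    intro e he
    induction e with
    | _ x y => rw [Sym2.coe_mk, Set.ncard_pair (by simpa using hdiag _ he)]
  rw [M.toFinite.ncard_biUnion (fun e _ => Set.toFinite _) hdisj, finsum_mem_congr rfl ncard_coe,
    finsum_mem_eq_finite_toFinset_sum _ M.toFinite, Finset.sum_const,
    ← Set.ncard_eq_toFinset_card M, smul_eq_mul, mul_comm]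

/-- `M` is a near-perfect matching of `V`: its members are pairwise disjoint two-element sets
covering all of `V` except for the two distinct vertices `p` and `q`. The columns of a
quasi-C-code are of this form. -/
structure IsNearPerfectMatching (M : Set (Sym2 V)) (p q : V) : Prop where
  ne : p ≠ q
  not_isDiag : ∀ e ∈ M, ¬ e.IsDiag
  pairwiseDisjoint : M.PairwiseDisjoint ((↑) : Sym2 V → Set V)
  biUnion_eq : ⋃ e ∈ M, (e : Set V) = {p, q}ᶜ

namespace IsNearPerfectMatching

theorem of_card_eq [Finite V] (hcard : Nat.card V = 2 * M.ncard + 2)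
    (hdiag : ∀ e ∈ M, ¬ e.IsDiag) (hdisj : M.PairwiseDisjoint ((↑) : Sym2 V → Set V))
    (hpq : p ≠ q) (hp : ∀ e ∈ M, p ∉ e) (hq : ∀ e ∈ M, q ∉ e) :
    IsNearPerfectMatching M p q where
  ne := hpq
  not_isDiag := hdiag
  pairwiseDisjoint := hdisj
  biUnion_eq := by
    refine Set.eq_of_subset_of_ncard_le (Set.iUnion₂_subset fun e he x hx => ?_) ?_
    · rintro (rfl | rfl)
      exacts [hp e he hx, hq e he hx]
    · rw [ncard_biUnion_sym2_of_pairwiseDisjoint hdiag hdisj, Set.ncard_compl, Set.ncard_pair hpq,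
        hcard, Nat.add_sub_cancel]

theorem image (h : IsNearPerfectMatching M p q) (f : V ≃ W) :
    IsNearPerfectMatching (Sym2.map f '' M) (f p) (f q) where
  ne := f.injective.ne h.ne
  not_isDiag := by
    rintro _ ⟨e, he, rfl⟩
    rw [Sym2.isDiag_map f.injective]
    exact h.not_isDiag e he
  pairwiseDisjoint := by
    rw [(Sym2.map.injective f.injective).injOn.pairwiseDisjoint_image]
    intro e he e' he' hne
    simpa only [Function.onFun, Function.comp_apply, Sym2.coe_map,
      Set.disjoint_image_iff f.injective] using h.pairwiseDisjoint he he' hne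
  biUnion_eq := by
    simp only [Set.biUnion_image, Sym2.coe_map, ← Set.image_iUnion, h.biUnion_eq,
      Set.image_compl_eq f.bijective, Set.image_pair]

theorem even_ncard_supp_diff [Finite V] (h : IsNearPerfectMatching M p q) {G : SimpleGraph V}
    (hG : SimpleGraph.fromEdgeSet M ≤ G) (K : G.ConnectedComponent) :
    Even (K.supp \ {p, q}).ncard := by
  have coe_subset : ∀ e ∈ M, ∀ x ∈ e, x ∈ K.supp → (e : Set V) ⊆ K.supp := by
    rintro e he x ⟨y, rfl⟩ hx
    have hxy : G.Adj x y :=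
      hG ((SimpleGraph.fromEdgeSet_adj M).2 ⟨he, by simpa using h.not_isDiag _ he⟩)
    rw [Sym2.coe_mk]
    exact Set.pair_subset hx ((K.mem_supp_congr_adj hxy).1 hx)
  have diff_eq : K.supp \ {p, q} = ⋃ e ∈ {e ∈ M | (e : Set V) ⊆ K.supp}, (e : Set V) := by
    ext x
    rw [Set.mem_sdiff, ← Set.mem_compl_iff, ← h.biUnion_eq]
    simp only [Set.mem_iUnion₂, Set.mem_ofPred_eq, SetLike.mem_coe, exists_prop]
    constructor
    · rintro ⟨hx, e, he, hxe⟩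
      exact ⟨e, ⟨he, coe_subset e he x hxe hx⟩, hxe⟩
    · rintro ⟨e, ⟨he, heK⟩, hxe⟩
      exact ⟨heK hxe, e, he, hxe⟩
  rw [diff_eq, ncard_biUnion_sym2_of_pairwiseDisjoint (fun e he => h.not_isDiag e he.1)
    (h.pairwiseDisjoint.subset (Set.sep_subset _ _))]
  exact even_two_mul _

theorem even_ncard_supp_iff [Finite V] (h : IsNearPerfectMatching M p q) {G : SimpleGraph V}
    (hG : SimpleGraph.fromEdgeSet M ≤ G) (K : G.ConnectedComponent) :
    Even K.supp.ncard ↔ (p ∈ K.supp ↔ q ∈ K.supp) := by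
  have hdiff := h.even_ncard_supp_diff hG K
  rw [← Set.ncard_inter_add_ncard_sdiff_eq_ncard K.supp {p, q}, Nat.even_add, iff_true_right hdiff]
  by_cases hp : p ∈ K.supp <;> by_cases hq : q ∈ K.supp <;>
    simp [hp, hq, h.ne, Set.inter_insert_of_mem, Set.inter_insert_of_notMem]

theorem reachable_iff [Finite V] (hM : IsNearPerfectMatching M p q)
    (hN : IsNearPerfectMatching N p' q') :
    (SimpleGraph.fromEdgeSet (M ∪ N)).Reachable p p' ↔
      (SimpleGraph.fromEdgeSet (M ∪ N)).Reachable q q' := by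
  have separates_iff (K : (SimpleGraph.fromEdgeSet (M ∪ N)).ConnectedComponent) :
      (p ∈ K.supp ↔ q ∈ K.supp) ↔ (p' ∈ K.supp ↔ q' ∈ K.supp) := by
    rw [← hM.even_ncard_supp_iff (SimpleGraph.fromEdgeSet_mono Set.subset_union_left),
      ← hN.even_ncard_supp_iff (SimpleGraph.fromEdgeSet_mono Set.subset_union_right)]
  simp only [SimpleGraph.ConnectedComponent.mem_supp_iff] at separates_iff
  simp only [← SimpleGraph.ConnectedComponent.eq]
  constructor
  · intro hp
    have := separates_iff (SimpleGraph.connectedComponentMk _ q)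
    grind
  · intro hq
    have := separates_iff (SimpleGraph.connectedComponentMk _ p)
    grind

end IsNearPerfectMatching

end Matching

section Shift

variable {m : ℕ} {C : Set (Sym2 (ZMod m))}

theorem shiftSet_shiftSet (i j : ZMod m) : shiftSet i (shiftSet j C) = shiftSet (j + i) C := by
  simp only [shiftSet, Set.image_image, Sym2.map_map, Function.comp_def, add_assoc]

theorem IsNearPerfectMatching.shiftSet {p q : ZMod m} (h : IsNearPerfectMatching C p q)
    (i : ZMod m) : IsNearPerfectMatching (shiftSet i C) (p + i) (q + i) :=
  h.image (Equiv.addRight i)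

end Shift

section Residue

variable {m d : ℕ} [NeZero m]

theorem val_mod_eq_val_castHom (h : d ∣ m) (a : ZMod m) :
    a.val % d = (ZMod.castHom h (ZMod d) a).val := by
  rw [ZMod.castHom_apply, ZMod.cast_eq_val, ZMod.val_natCast]

theorem val_sub_add_mod (h : d ∣ m) {a b : ZMod m} (hab : a.val % d = b.val % d) (c : ZMod m) :
    (a - b + c).val % d = c.val % d := by
  have : NeZero d := ⟨ne_zero_of_dvd_ne_zero (NeZero.ne m) h⟩
  simp only [val_mod_eq_val_castHom h] at hab ⊢
  rw [map_add, map_sub, ZMod.val_injective d hab, sub_self, zero_add]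

theorem natCast_mul_val_div (d : ℕ) (a : ZMod m) :
    ((d * (a.val / d) : ℕ) : ZMod m) = a - ((a.val % d : ℕ) : ZMod m) := by
  rw [eq_sub_iff_add_eq, ← Nat.cast_add, Nat.div_add_mod, ZMod.natCast_zmod_val]

end Residue

/-- The index `k` such that `C_k` is column `a` of the twin of the column family `C`. Since
`S_i + t` misses `i + t` and `r_i + t`, this is `k = i + (a - r_i)` for the `i` such that `r_i`
has the parity of `a`. -/
def twinIndex {n : ℕ} (r0 r1 a : ZMod (2 * n)) : ZMod (2 * n) :=
  if a.val % 2 = r0.val % 2 then a - r0 else a - r1 + 1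

section Column

variable {n : ℕ} [NeZero n] {S S0 S1 S0' S1' : Set (Sym2 (ZMod (2 * n)))}
  {a r r0 r1 : ZMod (2 * n)}

theorem qCol_eq_shiftSet : qCol n S0 S1 a =
    shiftSet (a - ((a.val % 2 : ℕ) : ZMod (2 * n))) (if a.val % 2 = 0 then S0 else S1) := by
  rw [qCol, shiftSet, natCast_mul_val_div]

theorem qCol_of_val_mod_two_eq_zero (ha : a.val % 2 = 0) : qCol n S0 S1 a = shiftSet a S0 := by
  rw [qCol_eq_shiftSet, ha, if_pos rfl, Nat.cast_zero, sub_zero]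

theorem qCol_of_val_mod_two_eq_one (ha : a.val % 2 = 1) :
    qCol n S0 S1 a = shiftSet (a - 1) S1 := by
  rw [qCol_eq_shiftSet, ha, if_neg one_ne_zero, Nat.cast_one]

theorem qCol_of_eq_image_sub (ha : a.val % 2 = r.val % 2)
    (htw : (if r.val % 2 = 0 then S0 else S1) =
      (Sym2.map (· - ((2 * (r.val / 2) : ℕ) : ZMod (2 * n)))) '' S) :
    qCol n S0 S1 a = shiftSet (a - r) S := by
  have image_eq : (Sym2.map (· - ((2 * (r.val / 2) : ℕ) : ZMod (2 * n)))) '' S =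
      shiftSet (-((2 * (r.val / 2) : ℕ) : ZMod (2 * n))) S := by
    simp only [shiftSet, sub_eq_add_neg]
  rw [qCol_eq_shiftSet, ha, htw, image_eq, shiftSet_shiftSet, natCast_mul_val_div]
  congr 1
  ring

theorem val_twinIndex_mod_two (hpar : r0.val % 2 ≠ r1.val % 2) :
    (twinIndex r0 r1 a).val % 2 = if a.val % 2 = r0.val % 2 then 0 else 1 := by
  unfold twinIndex
  split_ifs with ha
  · simpa using val_sub_add_mod (dvd_mul_right 2 n) ha 0
  · have ha1 : a.val % 2 = r1.val % 2 := by omega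
    rw [val_sub_add_mod (dvd_mul_right 2 n) ha1, ZMod.val_one_eq_one_mod, Nat.mod_mul_right_mod]

theorem twinIndex_injective (hpar : r0.val % 2 ≠ r1.val % 2) :
    Function.Injective (twinIndex r0 r1) := by
  intro a b hab
  have parity_iff : a.val % 2 = r0.val % 2 ↔ b.val % 2 = r0.val % 2 := by
    have val_eq := congrArg (ZMod.val · % 2) hab
    simp only [val_twinIndex_mod_two hpar] at val_eq
    split_ifs at val_eq <;> tauto
  simp only [twinIndex, parity_iff] at hab
  split_ifs at hab
  · exact sub_left_injective hab
  · exact sub_left_injective (add_right_cancel hab)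

theorem qCol_twinIndex (hpar : r0.val % 2 ≠ r1.val % 2) :
    qCol n S0 S1 (twinIndex r0 r1 a) =
      if a.val % 2 = r0.val % 2 then shiftSet (a - r0) S0 else shiftSet (a - r1) S1 := by
  have hval := val_twinIndex_mod_two (a := a) hpar
  split_ifs at hval ⊢ with ha
  · rw [qCol_of_val_mod_two_eq_zero hval, twinIndex, if_pos ha]
  · rw [qCol_of_val_mod_two_eq_one hval, twinIndex, if_neg ha, add_sub_cancel_right]

theorem qCol_twin (hpar : r0.val % 2 ≠ r1.val % 2)
    (htw0 : (if r0.val % 2 = 0 then S0' else S1') =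
      (Sym2.map (· - ((2 * (r0.val / 2) : ℕ) : ZMod (2 * n)))) '' S0)
    (htw1 : (if r1.val % 2 = 0 then S0' else S1') =
      (Sym2.map (· - ((2 * (r1.val / 2) : ℕ) : ZMod (2 * n)))) '' S1) (a : ZMod (2 * n)) :
    qCol n S0' S1' a = qCol n S0 S1 (twinIndex r0 r1 a) := by
  rw [qCol_twinIndex hpar]
  split_ifs with ha
  · exact qCol_of_eq_image_sub ha htw0
  · exact qCol_of_eq_image_sub (by omega) htw1

theorem isNearPerfectMatching_qCol_twinIndex (h0 : IsNearPerfectMatching S0 0 r0)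
    (h1 : IsNearPerfectMatching S1 1 r1) (hpar : r0.val % 2 ≠ r1.val % 2) (a : ZMod (2 * n)) :
    IsNearPerfectMatching (qCol n S0 S1 (twinIndex r0 r1 a)) (twinIndex r0 r1 a) a := by
  rw [qCol_twinIndex hpar, twinIndex]
  split_ifs
  · simpa using h0.shiftSet (a - r0)
  · simpa [add_comm] using h1.shiftSet (a - r1)

theorem stmt15_general (h0 : IsNearPerfectMatching S0 0 r0) (h1 : IsNearPerfectMatching S1 1 r1)
    (hpar : r0.val % 2 ≠ r1.val % 2)
    (htw0 : (if r0.val % 2 = 0 then S0' else S1') =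
      (Sym2.map (· - ((2 * (r0.val / 2) : ℕ) : ZMod (2 * n)))) '' S0)
    (htw1 : (if r1.val % 2 = 0 then S0' else S1') =
      (Sym2.map (· - ((2 * (r1.val / 2) : ℕ) : ZMod (2 * n)))) '' S1) :
    QuasiCCodeCond n S0 S1 ↔ QuasiCCodeCond n S0' S1' := by
  have hinj := twinIndex_injective hpar
  have near := isNearPerfectMatching_qCol_twinIndex h0 h1 hpar
  unfold QuasiCCodeCond
  rw [(Finite.injective_iff_surjective.1 hinj).forall₂]
  refine forall₂_congr fun a b => ?_
  rw [qCol_twin hpar htw0 htw1, qCol_twin hpar htw0 htw1, (near a).reachable_iff (near b),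
    hinj.ne_iff]

end Column

/-- Let `(S0, S1)` be an even 2-starter in `ZMod (2n)` whose pairs
are pairwise disjoint within each `Sᵢ`, with missing elements `r0 ∈ ZMod (2n) \ {0}`,
`r1 ∈ ZMod (2n) \ {1}` of opposite parity. If the column family induced by `(S0, S1)`
satisfies the quasi-C-code condition, then so does the one induced by the twin
`(S0', S1')` given by `S'_{r̄ᵢ mod 2} = Sᵢ - 2⌊r̄ᵢ/2⌋`. -/
theorem stmt15 (n : ℕ) (hn : 2 ≤ n)
    (S0 S1 : Set (Sym2 (ZMod (2*n))))
    (hstarter : IsEven2Starter n S0 S1)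
    (hd0 : ∀ e ∈ S0, ∀ e' ∈ S0, e ≠ e' → ∀ a, a ∈ e → a ∉ e')
    (hd1 : ∀ e ∈ S1, ∀ e' ∈ S1, e ≠ e' → ∀ a, a ∈ e → a ∉ e')
    (r0 r1 : ZMod (2*n))
    (hr0 : r0 ≠ 0) (hr0m : ∀ e ∈ S0, r0 ∉ e)
    (hr1 : r1 ≠ 1) (hr1m : ∀ e ∈ S1, r1 ∉ e)
    (hpar : r0.val % 2 ≠ r1.val % 2)
    (S0' S1' : Set (Sym2 (ZMod (2*n))))
    (htw0 : (if r0.val % 2 = 0 then S0' else S1') =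
      (Sym2.map (· - ((2 * (r0.val / 2) : ℕ) : ZMod (2*n)))) '' S0)
    (htw1 : (if r1.val % 2 = 0 then S0' else S1') =
      (Sym2.map (· - ((2 * (r1.val / 2) : ℕ) : ZMod (2*n)))) '' S1)
    (hq : QuasiCCodeCond n S0 S1) :
    QuasiCCodeCond n S0' S1' := by
  obtain ⟨hc0, hc1, hdiag0, hdiag1, h0, h1, -⟩ := hstarter
  have : NeZero n := ⟨by omega⟩
  have hcard : Nat.card (ZMod (2 * n)) = 2 * (n - 1) + 2 := by rw [Nat.card_zmod]; omega
  have near0 : IsNearPerfectMatching S0 0 r0 := .of_card_eq (hc0 ▸ hcard) hdiag0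
    (fun e he e' he' hne => Set.disjoint_left.2 (hd0 e he e' he' hne)) hr0.symm h0 hr0m
  have near1 : IsNearPerfectMatching S1 1 r1 := .of_card_eq (hc1 ▸ hcard) hdiag1
    (fun e he e' he' hne => Set.disjoint_left.2 (hd1 e he e' he' hne)) hr1.symm h1 hr1m
  exact (stmt15_general near0 near1 hpar htw0 htw1).1 hq
end
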